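/- Let α : ℕ → ℕ with α(n) ≥ 1 and let 0 < δ < 1 be such that n/(w·α(n)) > 1 for all sufficiently large n and all w ∈ (1−δ, 1+δ), and assume α(n)/n → 0. Then lim_{n→∞} (α(n)/n)·h̃''_{n,α}(1) = −1, where h̃''_{n,α} is the second derivative of h̃_{n,α}. -/

import Mathlib

/-!
The number `x(w)` is the critical point of `x ↦ w ∑ x ^ j / j - n log x`, so the first derivative
of the principal part of `h̃` is just `∑ x(w) ^ j / j`. Writing `S k = ∑ j ^ k x(w) ^ j`, the
operator `w d/dw` sends `S k` to `-(S 0 / S 1) S (k + 1)`, and this gives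
`w ^ 2 h̃'' = -n S 0 / S 1 + E` with `E` a polynomial in `S 0 S 2 / S 1 ^ 2` and
`S 0 ^ 2 S 3 / S 1 ^ 3`. As `S (k + 1) ≤ α(n) S k`, the term `E` is bounded in terms of
`α(n) S 0 / S 1` alone. Finally, when `S 0 / α(n)` is large the weights `x ^ j` concentrate near
the top exponent `j = α(n)`, whence `α(n) S 0 / S 1 → 1`.
-/

open Filter Finset Topology

/-- The `k`-th moment `∑ j ^ k y ^ j`, `1 ≤ j ≤ a`, of the weights `y ^ j`. The order `k` is an
integer so that the logarithmic sum `∑ y ^ j / j` is the moment of order `-1`. -/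
noncomputable def powerMoment (a : ℕ) (k : ℤ) (y : ℝ) : ℝ :=
  ∑ j ∈ Icc 1 a, (j : ℝ) ^ k * y ^ j

section PowerMoment

variable {a : ℕ} {y z : ℝ}

lemma powerMoment_neg_one (a : ℕ) (y : ℝ) :
    powerMoment a (-1) y = ∑ j ∈ Icc 1 a, y ^ j / j :=
  sum_congr rfl fun j _ ↦ by rw [zpow_neg_one, inv_mul_eq_div]

lemma powerMoment_zero (a : ℕ) (y : ℝ) : powerMoment a 0 y = ∑ j ∈ Icc 1 a, y ^ j := by
  simp only [powerMoment, zpow_zero, one_mul]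

lemma powerMoment_one (a : ℕ) (y : ℝ) : powerMoment a 1 y = ∑ j ∈ Icc 1 a, (j : ℝ) * y ^ j := by
  simp only [powerMoment, zpow_one]

lemma powerMoment_succ (a : ℕ) (k : ℤ) (y : ℝ) :
    powerMoment (a + 1) k y = powerMoment a k y + ((a + 1 : ℕ) : ℝ) ^ k * y ^ (a + 1) :=
  sum_Icc_succ_top (by lia) _

lemma powerMoment_pos (ha : 1 ≤ a) (k : ℤ) (hy : 0 < y) : 0 < powerMoment a k y := by
  refine sum_pos (fun j hj ↦ ?_) ⟨1, mem_Icc.2 ⟨le_rfl, ha⟩⟩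
  have hj0 : (0 : ℝ) < j := by exact_mod_cast (mem_Icc.1 hj).1
  positivity

lemma powerMoment_add_one_le (a : ℕ) (k : ℤ) (hy : 0 ≤ y) :
    powerMoment a (k + 1) y ≤ a * powerMoment a k y := by
  rw [powerMoment, powerMoment, mul_sum]
  refine sum_le_sum fun j hj ↦ ?_
  obtain ⟨hj1, hja⟩ := mem_Icc.1 hj
  have hj0 : (j : ℝ) ≠ 0 := by positivity
  calc (j : ℝ) ^ (k + 1) * y ^ j = j * ((j : ℝ) ^ k * y ^ j) := by rw [zpow_add_one₀ hj0]; ring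
    _ ≤ a * ((j : ℝ) ^ k * y ^ j) := by gcongr

lemma hasDerivAt_powerMoment (a : ℕ) (k : ℤ) (hy : y ≠ 0) :
    HasDerivAt (powerMoment a k) (powerMoment a (k + 1) y / y) y := by
  unfold powerMoment
  rw [sum_div]
  refine HasDerivAt.fun_sum fun j hj ↦ ?_
  have hj1 := (mem_Icc.1 hj).1
  have hj0 : (j : ℝ) ≠ 0 := by positivity
  refine ((hasDerivAt_pow j y).const_mul _).congr_deriv ?_
  rw [zpow_add_one₀ hj0, eq_div_iff hy, ← pow_sub_one_mul (by lia : j ≠ 0) y]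
  ring

lemma sub_le_powerMoment_zero_sub (ha : 1 ≤ a) (hy : 0 ≤ y) (hyz : y ≤ z) :
    z - y ≤ powerMoment a 0 z - powerMoment a 0 y := by
  rw [powerMoment_zero, powerMoment_zero, ← sum_sub_distrib]
  simpa only [pow_one] using single_le_sum (f := fun j ↦ z ^ j - y ^ j)
    (fun j _ ↦ sub_nonneg.2 (pow_le_pow_left₀ hy hyz j)) (mem_Icc.2 ⟨le_rfl, ha⟩)

lemma abs_sub_le_abs_powerMoment_zero_sub (ha : 1 ≤ a) (hy : 0 ≤ y) (hz : 0 ≤ z) :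
    |z - y| ≤ |powerMoment a 0 z - powerMoment a 0 y| := by
  wlog hyz : y ≤ z generalizing y z
  · rw [abs_sub_comm, abs_sub_comm (powerMoment a 0 z)]
    exact this hz hy (le_of_not_ge hyz)
  rw [abs_of_nonneg (sub_nonneg.2 hyz)]
  exact (sub_le_powerMoment_zero_sub ha hy hyz).trans (le_abs_self _)

end PowerMoment

section Concentration

variable {a : ℕ} {y : ℝ}

lemma sub_one_mul_powerMoment_zero (a : ℕ) (y : ℝ) :
    (y - 1) * powerMoment a 0 y = y ^ (a + 1) - y := by
  induction a with
  | zero => simp [powerMoment]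
  | succ a ih => rw [powerMoment_succ, mul_add, ih, zpow_zero]; ring

lemma sub_one_mul_mul_powerMoment_zero_sub (a : ℕ) (y : ℝ) :
    (y - 1) * (a * powerMoment a 0 y - powerMoment a 1 y) = powerMoment a 0 y - a * y := by
  induction a with
  | zero => simp [powerMoment]
  | succ a ih =>
    rw [powerMoment_succ, powerMoment_succ, zpow_zero, zpow_one]
    push_cast
    linear_combination ih + sub_one_mul_powerMoment_zero a y

lemma one_lt_of_lt_powerMoment_zero (hy : 0 ≤ y) (h : a < powerMoment a 0 y) : 1 < y := by
  contrapose! h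
  calc powerMoment a 0 y = ∑ j ∈ Icc 1 a, y ^ j := powerMoment_zero a y
    _ ≤ ∑ _j ∈ Icc 1 a, (1 : ℝ) := sum_le_sum fun j _ ↦ pow_le_one₀ hy h
    _ = a := by simp

lemma log_powerMoment_zero_div_le (ha : 1 ≤ a) (hy : 1 ≤ y) :
    Real.log (powerMoment a 0 y / a) ≤ a * (y - 1) := by
  have hy0 : 0 < y := one_pos.trans_le hy
  have hS := powerMoment_pos ha 0 hy0
  have hSle : powerMoment a 0 y ≤ y ^ a * a := by
    calc powerMoment a 0 y = ∑ j ∈ Icc 1 a, y ^ j := powerMoment_zero a y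
      _ ≤ ∑ _j ∈ Icc 1 a, y ^ a := sum_le_sum fun j hj ↦ pow_le_pow_right₀ hy (mem_Icc.1 hj).2
      _ = y ^ a * a := by simp [mul_comm]
  calc Real.log (powerMoment a 0 y / a) ≤ Real.log (y ^ a) :=
        Real.log_le_log (by positivity) (div_le_of_le_mul₀ (by positivity) (by positivity) hSle)
    _ = a * Real.log y := Real.log_pow y a
    _ ≤ a * (y - 1) := by gcongr; exact Real.log_le_sub_one_of_pos hy0

lemma log_mul_powerMoment_zero_sub_le (ha : 1 ≤ a) (hy : 1 ≤ y) :
    Real.log (powerMoment a 0 y / a) * (a * powerMoment a 0 y - powerMoment a 1 y) ≤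
      a * powerMoment a 0 y := by
  have hgap : 0 ≤ a * powerMoment a 0 y - powerMoment a 1 y :=
    sub_nonneg.2 (powerMoment_add_one_le a 0 (by positivity))
  calc Real.log (powerMoment a 0 y / a) * (a * powerMoment a 0 y - powerMoment a 1 y)
      ≤ a * (y - 1) * (a * powerMoment a 0 y - powerMoment a 1 y) := by
        gcongr; exact log_powerMoment_zero_div_le ha hy
    _ = a * (powerMoment a 0 y - a * y) := by
        rw [mul_assoc, sub_one_mul_mul_powerMoment_zero_sub]
    _ ≤ a * powerMoment a 0 y := by gcongr; exact sub_le_self _ (by positivity)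

lemma one_sub_inv_log_le_powerMoment_one_div (ha : 1 ≤ a) (hy : 0 ≤ y)
    (h : a < powerMoment a 0 y) :
    1 - (Real.log (powerMoment a 0 y / a))⁻¹ ≤ powerMoment a 1 y / (a * powerMoment a 0 y) := by
  have ha0 : (0 : ℝ) < a := by exact_mod_cast ha
  have hS : 0 < powerMoment a 0 y := ha0.trans h
  have hlog : 0 < Real.log (powerMoment a 0 y / a) := Real.log_pos ((one_lt_div ha0).2 h)
  have hmul := log_mul_powerMoment_zero_sub_le ha (one_lt_of_lt_powerMoment_zero hy h).le
  rw [sub_le_comm, one_sub_div (by positivity), inv_eq_one_div,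
    div_le_div_iff₀ (by positivity) hlog]
  linarith

lemma tendsto_mul_powerMoment_zero_div_one {ι : Type*} {l : Filter ι} {a : ι → ℕ} {y : ι → ℝ}
    (ha : ∀ᶠ i in l, 1 ≤ a i) (hy : ∀ᶠ i in l, 0 < y i)
    (h : Tendsto (fun i ↦ powerMoment (a i) 0 (y i) / a i) l atTop) :
    Tendsto (fun i ↦ a i * powerMoment (a i) 0 (y i) / powerMoment (a i) 1 (y i)) l (𝓝 1) := by
  have hlower : Tendsto (fun i ↦ 1 - (Real.log (powerMoment (a i) 0 (y i) / a i))⁻¹) l (𝓝 1) := by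
    simpa using (Real.tendsto_log_atTop.comp h).inv_tendsto_atTop.const_sub 1
  have hratio : Tendsto (fun i ↦ powerMoment (a i) 1 (y i) / (a i * powerMoment (a i) 0 (y i)))
      l (𝓝 1) := by
    refine tendsto_of_tendsto_of_tendsto_of_le_of_le' hlower tendsto_const_nhds ?_ ?_
    · filter_upwards [ha, hy, h.eventually_gt_atTop 1] with i hai hyi hi
      have ha0 : (0 : ℝ) < a i := by exact_mod_cast hai
      exact one_sub_inv_log_le_powerMoment_one_div hai hyi.le ((one_lt_div ha0).1 hi)
    · filter_upwards [ha, hy] with i hai hyi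
      have hS := powerMoment_pos hai 0 hyi
      exact div_le_one_of_le₀ (powerMoment_add_one_le (a i) 0 hyi.le) (by positivity)
  simpa only [inv_div, inv_one] using hratio.inv₀ one_ne_zero

end Concentration

/-- `w ^ 2` times the second derivative of `-(1 / 2) log (2 π w S₁)` along a saddle point `y` (see
`IsSaddlePoint`), written in the moments `Sₖ` of `y`. -/
noncomputable def gaussianCorrection (a : ℕ) (y : ℝ) : ℝ :=
  1 / 2 - powerMoment a 0 y * powerMoment a 2 y / powerMoment a 1 y ^ 2
    - powerMoment a 0 y ^ 2 * powerMoment a 3 y / (2 * powerMoment a 1 y ^ 3)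
    + powerMoment a 0 y ^ 2 * powerMoment a 2 y ^ 2 / powerMoment a 1 y ^ 4

lemma abs_gaussianCorrection_le {a : ℕ} (ha : 1 ≤ a) {y : ℝ} (hy : 0 < y) :
    |gaussianCorrection a y| ≤ 1 / 2 + a * powerMoment a 0 y / powerMoment a 1 y
      + (a * powerMoment a 0 y / powerMoment a 1 y) ^ 2 := by
  have h0 := powerMoment_pos ha 0 hy
  have h1 := powerMoment_pos ha 1 hy
  have h2 := powerMoment_pos ha 2 hy
  have h3 := powerMoment_pos ha 3 hy
  have h21 : powerMoment a 2 y ≤ a * powerMoment a 1 y := powerMoment_add_one_le a 1 hy.le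
  have h32 : powerMoment a 3 y ≤ a * powerMoment a 2 y := powerMoment_add_one_le a 2 hy.le
  unfold gaussianCorrection
  generalize powerMoment a 0 y = s₀ at *
  generalize powerMoment a 1 y = s₁ at *
  generalize powerMoment a 2 y = s₂ at *
  generalize powerMoment a 3 y = s₃ at *
  have hA : s₀ * s₂ / s₁ ^ 2 ≤ a * s₀ / s₁ := by
    calc s₀ * s₂ / s₁ ^ 2 ≤ s₀ * (a * s₁) / s₁ ^ 2 := by gcongr
      _ = a * s₀ / s₁ := by field_simp
  have hB : s₀ ^ 2 * s₃ / (2 * s₁ ^ 3) ≤ (a * s₀ / s₁) ^ 2 / 2 := by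
    calc s₀ ^ 2 * s₃ / (2 * s₁ ^ 3) ≤ s₀ ^ 2 * (a * (a * s₁)) / (2 * s₁ ^ 3) := by
          gcongr; exact h32.trans (by gcongr)
      _ = (a * s₀ / s₁) ^ 2 / 2 := by field_simp
  have hC : s₀ ^ 2 * s₂ ^ 2 / s₁ ^ 4 ≤ (a * s₀ / s₁) ^ 2 := by
    calc s₀ ^ 2 * s₂ ^ 2 / s₁ ^ 4 = (s₀ * s₂ / s₁ ^ 2) ^ 2 := by field_simp
      _ ≤ (a * s₀ / s₁) ^ 2 := by gcongr
  have hA0 : 0 ≤ s₀ * s₂ / s₁ ^ 2 := by positivity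
  have hB0 : 0 ≤ s₀ ^ 2 * s₃ / (2 * s₁ ^ 3) := by positivity
  have hC0 : 0 ≤ s₀ ^ 2 * s₂ ^ 2 / s₁ ^ 4 := by positivity
  rw [abs_le]
  constructor <;> linarith

/-- `X w` is the positive critical point of `y ↦ w ∑ y ^ j / j - N log y`, `1 ≤ j ≤ a`, for every
`w > 0`. -/
def IsSaddlePoint (a : ℕ) (N : ℝ) (X : ℝ → ℝ) : Prop :=
  ∀ w, 0 < w → 0 < X w ∧ powerMoment a 0 (X w) = N / w

/-- The function `h̃` along a map `X`: the critical value `w ∑ X ^ j / j - N log X` together with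
the logarithm of the Gaussian factor of the saddle-point approximation. -/
noncomputable def saddleExponent (a : ℕ) (N : ℝ) (X : ℝ → ℝ) (w : ℝ) : ℝ :=
  w * powerMoment a (-1) (X w) - N * Real.log (X w)
    - 1 / 2 * Real.log (2 * Real.pi * w * powerMoment a 1 (X w))

namespace IsSaddlePoint

variable {a : ℕ} {N : ℝ} {X : ℝ → ℝ} {w : ℝ}

lemma mul_powerMoment_zero (hX : IsSaddlePoint a N X) (hw : 0 < w) :
    w * powerMoment a 0 (X w) = N := by
  rw [(hX w hw).2, mul_div_cancel₀ N hw.ne']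

lemma param_pos (hX : IsSaddlePoint a N X) (ha : 1 ≤ a) : 0 < N := by
  simpa only [hX.mul_powerMoment_zero one_pos] using
    mul_pos one_pos (powerMoment_pos ha 0 (hX 1 one_pos).1)

lemma continuousAt (hX : IsSaddlePoint a N X) (ha : 1 ≤ a) (hw : 0 < w) : ContinuousAt X w := by
  have hdiv : Tendsto (fun v ↦ |N / v - N / w|) (𝓝 w) (𝓝 0) := by
    have : ContinuousAt (fun v ↦ |N / v - N / w|) w := by fun_prop (disch := exact hw.ne')
    simpa only [ContinuousAt, sub_self, abs_zero] using this
  rw [ContinuousAt, tendsto_iff_dist_tendsto_zero]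
  refine squeeze_zero' (.of_forall fun _ ↦ dist_nonneg) ?_ hdiv
  filter_upwards [lt_mem_nhds hw] with v hv
  rw [Real.dist_eq, ← (hX v hv).2, ← (hX w hw).2]
  exact abs_sub_le_abs_powerMoment_zero_sub ha (hX w hw).1.le (hX v hv).1.le

lemma hasDerivAt (hX : IsSaddlePoint a N X) (ha : 1 ≤ a) (hw : 0 < w) :
    HasDerivAt X (-(X w * powerMoment a 0 (X w) / (w * powerMoment a 1 (X w)))) w := by
  have hx := (hX w hw).1
  have h0 := powerMoment_pos ha 0 hx
  have h1 := powerMoment_pos ha 1 hx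
  have hN := hX.param_pos ha
  have hinv : ∀ᶠ v in 𝓝 w, N / powerMoment a 0 (X v) = v := by
    filter_upwards [lt_mem_nhds hw] with v hv
    rw [(hX v hv).2, div_div_cancel₀ hN.ne']
  have hf : HasDerivAt (fun y ↦ N / powerMoment a 0 y)
      (-(N * powerMoment a 1 (X w) / (X w * powerMoment a 0 (X w) ^ 2))) (X w) := by
    refine ((hasDerivAt_const (X w) N).fun_div (hasDerivAt_powerMoment a 0 hx.ne')
      h0.ne').congr_deriv ?_
    rw [zero_add]
    field_simp
    ring
  refine (hf.of_local_left_inverse (hX.continuousAt ha hw)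
    (neg_ne_zero.2 (by positivity)) hinv).congr_deriv ?_
  rw [← hX.mul_powerMoment_zero hw]
  field_simp

lemma hasDerivAt_powerMoment_comp (hX : IsSaddlePoint a N X) (ha : 1 ≤ a) (hw : 0 < w) (k : ℤ) :
    HasDerivAt (fun v ↦ powerMoment a k (X v))
      (-(powerMoment a 0 (X w) * powerMoment a (k + 1) (X w) / (w * powerMoment a 1 (X w)))) w := by
  have hx := (hX w hw).1
  refine ((hasDerivAt_powerMoment a k hx.ne').comp w (hX.hasDerivAt ha hw)).congr_deriv ?_
  field_simp

lemma hasDerivAt_principalPart (hX : IsSaddlePoint a N X) (ha : 1 ≤ a) (hw : 0 < w) :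
    HasDerivAt (fun v ↦ v * powerMoment a (-1) (X v) - N * Real.log (X v))
      (powerMoment a (-1) (X w)) w := by
  have hx := (hX w hw).1
  have h1 := powerMoment_pos ha 1 hx
  refine (((hasDerivAt_id w).fun_mul (hX.hasDerivAt_powerMoment_comp ha hw (-1))).sub
    (((hX.hasDerivAt ha hw).log hx.ne').const_mul N)).congr_deriv ?_
  rw [← hX.mul_powerMoment_zero hw, neg_add_cancel, id]
  field_simp
  ring

lemma hasDerivAt_log_gaussianFactor (hX : IsSaddlePoint a N X) (ha : 1 ≤ a) (hw : 0 < w) :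
    HasDerivAt (fun v ↦ 1 / 2 * Real.log (2 * Real.pi * v * powerMoment a 1 (X v)))
      ((1 - powerMoment a 0 (X w) * powerMoment a 2 (X w) / powerMoment a 1 (X w) ^ 2) /
        (2 * w)) w := by
  have h1 := powerMoment_pos ha 1 (hX w hw).1
  have hne : 2 * Real.pi * w * powerMoment a 1 (X w) ≠ 0 := by positivity
  refine (((((hasDerivAt_id w).const_mul (2 * Real.pi)).fun_mul
    (hX.hasDerivAt_powerMoment_comp ha hw 1)).log hne).const_mul (1 / 2)).congr_deriv ?_
  rw [id, one_add_one_eq_two]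
  field_simp
  ring

lemma hasDerivAt_saddleExponent (hX : IsSaddlePoint a N X) (ha : 1 ≤ a) (hw : 0 < w) :
    HasDerivAt (saddleExponent a N X)
      (powerMoment a (-1) (X w) -
        (1 - powerMoment a 0 (X w) * powerMoment a 2 (X w) / powerMoment a 1 (X w) ^ 2) /
          (2 * w)) w :=
  (hX.hasDerivAt_principalPart ha hw).sub (hX.hasDerivAt_log_gaussianFactor ha hw)

lemma hasDerivAt_deriv_saddleExponent (hX : IsSaddlePoint a N X) (ha : 1 ≤ a) (hw : 0 < w) :
    HasDerivAt (deriv (saddleExponent a N X))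
      ((-(N * powerMoment a 0 (X w) / powerMoment a 1 (X w)) + gaussianCorrection a (X w)) /
        w ^ 2) w := by
  have h1 := powerMoment_pos ha 1 (hX w hw).1
  have hderiv : deriv (saddleExponent a N X) =ᶠ[𝓝 w] fun v ↦ powerMoment a (-1) (X v) -
      (1 - powerMoment a 0 (X v) * powerMoment a 2 (X v) / powerMoment a 1 (X v) ^ 2) /
        (2 * v) := by
    filter_upwards [lt_mem_nhds hw] with v hv using (hX.hasDerivAt_saddleExponent ha hv).deriv
  have hS := hX.hasDerivAt_powerMoment_comp ha hw
  refine HasDerivAt.congr_of_eventuallyEq (((hS (-1)).sub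
    (((((hS 0).fun_mul (hS 2)).fun_div ((hS 1).fun_pow 2) (by positivity)).const_sub 1).fun_div
      ((hasDerivAt_id w).const_mul 2) (by positivity))).congr_deriv ?_) hderiv
  rw [← hX.mul_powerMoment_zero hw, gaussianCorrection]
  simp only [id, neg_add_cancel, zero_add, Int.reduceAdd, Int.reduceNeg, Nat.add_one_sub_one,
    pow_one]
  field_simp
  ring

lemma iteratedDeriv_two_saddleExponent (hX : IsSaddlePoint a N X) (ha : 1 ≤ a) (hw : 0 < w) :
    iteratedDeriv 2 (saddleExponent a N X) w =
      (-(N * powerMoment a 0 (X w) / powerMoment a 1 (X w)) + gaussianCorrection a (X w)) /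
        w ^ 2 := by
  rw [iteratedDeriv_succ, iteratedDeriv_one]
  exact (hX.hasDerivAt_deriv_saddleExponent ha hw).deriv

end IsSaddlePoint

section Asymptotics

variable {ι : Type*} {l : Filter ι} {a : ι → ℕ} {N : ι → ℝ} {X : ι → ℝ → ℝ} {w : ℝ}

lemma tendsto_mul_powerMoment_zero_div_one_of_isSaddlePoint (ha : ∀ᶠ i in l, 1 ≤ a i)
    (haN : Tendsto (fun i ↦ a i / N i) l (𝓝 0)) (hX : ∀ᶠ i in l, IsSaddlePoint (a i) (N i) (X i))
    (hw : 0 < w) :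
    Tendsto (fun i ↦ a i * powerMoment (a i) 0 (X i w) / powerMoment (a i) 1 (X i w)) l (𝓝 1) := by
  have haN_pos : ∀ᶠ i in l, a i / N i ∈ Set.Ioi 0 := by
    filter_upwards [ha, hX] with i hai hXi
    have hN := hXi.param_pos hai
    exact div_pos (by exact_mod_cast hai) hN
  have hNa : Tendsto (fun i ↦ N i / a i) l atTop := by
    simpa only [Pi.inv_def, inv_div] using
      (tendsto_nhdsWithin_iff.2 ⟨haN, haN_pos⟩).inv_tendsto_nhdsGT_zero
  refine tendsto_mul_powerMoment_zero_div_one ha (hX.mono fun i hXi ↦ (hXi w hw).1)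
    ((hNa.atTop_div_const hw).congr' ?_)
  filter_upwards [hX] with i hXi
  rw [(hXi w hw).2, div_right_comm]

lemma tendsto_mul_gaussianCorrection (ha : ∀ᶠ i in l, 1 ≤ a i)
    (haN : Tendsto (fun i ↦ a i / N i) l (𝓝 0)) (hX : ∀ᶠ i in l, IsSaddlePoint (a i) (N i) (X i))
    (hw : 0 < w) :
    Tendsto (fun i ↦ a i / N i * gaussianCorrection (a i) (X i w)) l (𝓝 0) := by
  have hr := tendsto_mul_powerMoment_zero_div_one_of_isSaddlePoint ha haN hX hw
  refine squeeze_zero_norm' ?_ (by simpa using haN.abs.mul ((hr.const_add (1 / 2)).add (hr.pow 2)))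
  filter_upwards [ha, hX] with i hai hXi
  rw [Real.norm_eq_abs, abs_mul]
  gcongr
  exact abs_gaussianCorrection_le hai (hXi w hw).1

lemma tendsto_mul_iteratedDeriv_two_saddleExponent (ha : ∀ᶠ i in l, 1 ≤ a i)
    (haN : Tendsto (fun i ↦ a i / N i) l (𝓝 0)) (hX : ∀ᶠ i in l, IsSaddlePoint (a i) (N i) (X i))
    (hw : 0 < w) :
    Tendsto (fun i ↦ a i / N i * iteratedDeriv 2 (saddleExponent (a i) (N i) (X i)) w) l
      (𝓝 (-1 / w ^ 2)) := by
  have hlim := ((tendsto_mul_powerMoment_zero_div_one_of_isSaddlePoint ha haN hX hw).neg.add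
    (tendsto_mul_gaussianCorrection ha haN hX hw)).div_const (w ^ 2)
  rw [add_zero] at hlim
  refine hlim.congr' ?_
  filter_upwards [ha, hX] with i hai hXi
  have hN := hXi.param_pos hai
  rw [hXi.iteratedDeriv_two_saddleExponent hai hw]
  field_simp

theorem stmt_15_general {h : ι → ℝ → ℝ} (ha : ∀ᶠ i in l, 1 ≤ a i)
    (haN : Tendsto (fun i ↦ a i / N i) l (𝓝 0))
    (hX : ∀ᶠ i in l, ∀ v, 0 < v → 0 < X i v ∧ ∑ j ∈ Icc 1 (a i), X i v ^ j = N i / v)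
    (hh : ∀ᶠ i in l, ∀ v, 0 < v →
      h i v = v * ∑ j ∈ Icc 1 (a i), X i v ^ j / j - N i * Real.log (X i v)
        - 1 / 2 * Real.log (2 * Real.pi * v * ∑ j ∈ Icc 1 (a i), (j : ℝ) * X i v ^ j))
    (hw : 0 < w) :
    Tendsto (fun i ↦ a i / N i * iteratedDeriv 2 (h i) w) l (𝓝 (-1 / w ^ 2)) := by
  simp only [← powerMoment_neg_one, ← powerMoment_zero, ← powerMoment_one] at hX hh
  refine (tendsto_mul_iteratedDeriv_two_saddleExponent ha haN hX hw).congr' ?_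
  filter_upwards [hh] with i hhi
  have heq : saddleExponent (a i) (N i) (X i) =ᶠ[𝓝 w] h i := by
    filter_upwards [lt_mem_nhds hw] with v hv using (hhi v hv).symm
  rw [heq.iteratedDeriv_eq]

end Asymptotics

open Filter Real in
/-- asymptotics of `h̃''_{n,α}(1)`.  Suppose `n/(w α(n)) > 1`
for all large `n` and all `w ∈ (1−δ, 1+δ)`, and `α(n)/n → 0`.  Here
`x n w = x_{n,α}(w)` is the positive solution of `∑_{j=1}^{α(n)} x^j = n/w` and
`h̃ n w = w ∑_{j=1}^{α(n)} x(w)^j/j − n log x(w) − (1/2) log(2πw ∑ j x(w)^j)`.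
Then `(α(n)/n)·h̃''_{n,α}(1) → −1`. -/
theorem stmt_15 (α : ℕ → ℕ) (hα : ∀ n, 1 ≤ α n)
    (δ : ℝ) (hδ0 : 0 < δ) (hδ1 : δ < 1)
    (hbig : ∀ᶠ n : ℕ in atTop, ∀ w ∈ Set.Ioo (1 - δ) (1 + δ),
      1 < (n : ℝ) / (w * α n))
    (hαn : Tendsto (fun n : ℕ => (α n : ℝ) / n) atTop (nhds 0))
    (x : ℕ → ℝ → ℝ)
    (hx : ∀ n, 1 ≤ n → ∀ w : ℝ, 0 < w →
      0 < x n w ∧ ∑ j ∈ Finset.Icc 1 (α n), x n w ^ j = (n : ℝ) / w)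
    (h : ℕ → ℝ → ℝ)
    (hh : ∀ n, ∀ w : ℝ, 0 < w →
      h n w = w * ∑ j ∈ Finset.Icc 1 (α n), x n w ^ j / j - (n : ℝ) * Real.log (x n w)
        - 1 / 2 * Real.log (2 * π * w * ∑ j ∈ Finset.Icc 1 (α n), (j : ℝ) * x n w ^ j)) :
    Tendsto (fun n : ℕ => (α n : ℝ) / n * iteratedDeriv 2 (h n) 1) atTop
      (nhds (-1)) := by
  simpa using stmt_15_general (.of_forall hα) hαn (eventually_atTop.2 ⟨1, hx⟩) (.of_forall hh)
    one_pos
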